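/- Let 3 ≤ j ≤ k and suppose: f ∈ C^k(ℝⁿ;ℝⁿ), h ∈ C^k(ℝⁿ;ℝ^p); V: [0,T]×ℝⁿ → ℝ is such that V(t,·) ∈ C^{k+1}(ℝⁿ;ℝ) for each t, that V and its spatial derivatives are C¹ in time with ∂_t D^j V(t,ξ) = D^j (∂_t V)(t,ξ), and that V satisfies the HJB equation ∂_t V(t,ξ) = −∇V(t,ξ)ᵀ f(ξ) − ½‖Gᵀ∇V(t,ξ)‖²_{R⁻¹} + ½‖y(t) − h(ξ)‖²_Q. Then for all (t,ξ) ∈ [0,T]×ℝⁿ: ∂_t D^j V(t,ξ) = −Σ_{i=0}^{j} Sym_{i,j−i}( D^{i+1} V(t,ξ) *_{1,1} D^{j−i} f(ξ) ) − ½ Σ_{i=0}^{j} Sym_{i,j−i}( D^{i+1} V(t,ξ) *_{1,1} ( G R⁻¹ Gᵀ *_{2,1} D^{j−i+1} V(t,ξ) ) ) − D^j h(ξ) *_{1,1} (Q y(t)) + ½ Σ_{i=0}^{j} Sym_{i,j−i}( D^i h(ξ) *_{1,1} ( Q *_{2,1} D^{j−i} h(ξ) ) ). -/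

import Mathlib

open scoped BigOperators
open Matrix

/-- The set `S_{i,j}` of `(i,j)`-shuffles, realized as the permutations of `Fin k`
(with `k = i + j`) that are strictly increasing on the first `i` positions and on the
remaining positions. -/
def shuffles (k i : ℕ) : Finset (Equiv.Perm (Fin k)) :=
  Finset.univ.filter fun σ =>
    (∀ a b : Fin k, a < b → (b : ℕ) < i → σ a < σ b) ∧
    (∀ a b : Fin k, a < b → i ≤ (a : ℕ) → σ a < σ b)

/-- Entry of the order-`k` spatial derivative tensor of `u : ℝⁿ → ℝ` at `ξ`. -/
noncomputable def Dt (n k : ℕ) (u : (Fin n → ℝ) → ℝ) (ξ : Fin n → ℝ)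
    (idx : Fin k → Fin n) : ℝ :=
  iteratedFDeriv ℝ k u ξ fun r => Pi.single (idx r) 1

/-- Inclusion of the first block `{0, …, i-1}` into `Fin k`. -/
def finL {k : ℕ} (i : ℕ) (h : i ≤ k) (r : Fin i) : Fin k := Fin.castLE h r

/-- Inclusion of the second block into `Fin k`, shifting by `i`. -/
def finR {k : ℕ} (i : ℕ) {l : ℕ} (h : i + l = k) (r : Fin l) : Fin k :=
  ⟨i + r.1, by have := r.2; omega⟩

/-- Iterated partial derivatives along a list of indices. -/
noncomputable def PD {n : ℕ} : List (Fin n) → ((Fin n → ℝ) → ℝ) → (Fin n → ℝ) → ℝ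
  | [], u => u
  | a :: l, u => fun x => fderiv ℝ (PD l u) x (Pi.single a 1)

lemma contDiff_partial {n N : ℕ} {u : (Fin n → ℝ) → ℝ} (hu : ContDiff ℝ ((N + 1 : ℕ)) u)
    (v : Fin n → ℝ) : ContDiff ℝ N (fun x => fderiv ℝ u x v) := by
  have h1 : ContDiff ℝ N (fderiv ℝ u) := hu.fderiv_right (by push_cast; exact le_rfl)
  exact h1.clm_apply contDiff_const

lemma PD_contDiff {n : ℕ} (l : List (Fin n)) : ∀ (N : ℕ) {u : (Fin n → ℝ) → ℝ},
    ContDiff ℝ ((N + l.length : ℕ)) u → ContDiff ℝ N (PD l u) := by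
  induction l with
  | nil => intro N u hu; simpa [PD] using hu
  | cons a l ih =>
    intro N u hu
    apply contDiff_partial
    apply ih
    rw [show N + 1 + l.length = N + (a :: l).length by simp; omega]
    exact hu

lemma PD_comm {n : ℕ} (s : Fin n) (l : List (Fin n)) {u : (Fin n → ℝ) → ℝ}
    (hu : ContDiff ℝ ((l.length + 1 : ℕ)) u) : PD l (PD [s] u) = PD (s :: l) u := by
  induction l with
  | nil => rfl
  | cons a l ih =>
    have h0 := ih (hu.of_le (by simp))
    have h2 : ContDiff ℝ (2 : ℕ) (PD l u) := PD_contDiff l 2 (by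
      rw [show 2 + l.length = (a :: l).length + 1 by simp; omega]; exact hu)
    have hd : ContDiff ℝ (1 : ℕ) (fderiv ℝ (PD l u)) := h2.fderiv_right (by norm_num)
    funext x
    change fderiv ℝ (PD l (PD [s] u)) x _ = 
      fderiv ℝ (fun x => fderiv ℝ (PD l u) x (Pi.single a 1)) x (Pi.single s 1)
    rw [h0]
    change fderiv ℝ (fun x => fderiv ℝ (PD l u) x (Pi.single s 1)) x (Pi.single a 1) = _
    have key : ∀ v w : Fin n → ℝ, fderiv ℝ (fun x => fderiv ℝ (PD l u) x v) x w
        = fderiv ℝ (fderiv ℝ (PD l u)) x w v := by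
      intro v w
      have hdx : DifferentiableAt ℝ (fderiv ℝ (PD l u)) x :=
        (hd.differentiable (by norm_num)) x
      rw [fderiv_clm_apply hdx (differentiableAt_const v)]
      simp
    rw [key, key]
    exact (h2.contDiffAt.isSymmSndFDerivAt (by simp)) _ _

lemma Dt_eq_PD {n : ℕ} {u : (Fin n → ℝ) → ℝ} : ∀ (k : ℕ), ContDiff ℝ k u →
    ∀ (ξ : Fin n → ℝ) (idx : Fin k → Fin n), Dt n k u ξ idx = PD (List.ofFn idx) u ξ := by
  intro k
  induction k with
  | zero => intro _ ξ idx; simp [Dt, PD]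
  | succ k ih =>
    intro hu ξ idx
    have hu' : ContDiff ℝ k u := hu.of_le (by push_cast; exact le_self_add)
    rw [List.ofFn_succ]
    change _ = fderiv ℝ (PD (List.ofFn fun i => idx i.succ) u) ξ (Pi.single (idx 0) 1)
    have : PD (List.ofFn fun i => idx i.succ) u
        = fun x => Dt n k u x (fun i => idx i.succ) := by
      funext x; rw [ih hu']
    rw [this]
    unfold Dt
    rw [iteratedFDeriv_succ_apply_left]
    have hd : DifferentiableAt ℝ (iteratedFDeriv ℝ k u) ξ :=
      (hu.differentiable_iteratedFDeriv (by exact_mod_cast Nat.lt_succ_self k)) ξ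
    have h2 := (hd.hasFDerivAt.continuousMultilinear_apply_const
      (fun r : Fin k => (Pi.single (idx r.succ) 1 : Fin n → ℝ))).fderiv
    rw [h2]
    rfl

/-- The sublist of indices selected by `c`. -/
def sel {n j : ℕ} (idx : Fin j → Fin n) (c : Fin j → Bool) : List (Fin n) :=
  ((List.finRange j).filter c).map idx

lemma sel_length_le {n j : ℕ} (idx : Fin j → Fin n) (c : Fin j → Bool) :
    (sel idx c).length ≤ j := by
  unfold sel
  rw [List.length_map]
  exact (List.length_filter_le _ _).trans (by simp)

lemma sel_cons_true {n j : ℕ} (idx : Fin (j + 1) → Fin n) (c : Fin j → Bool) :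
    sel idx (Fin.cons true c : Fin (j + 1) → Bool)
      = idx 0 :: sel (fun i => idx i.succ) c := by
  simp [sel, List.finRange_succ, List.filter_map, Function.comp_def]

lemma sel_cons_false {n j : ℕ} (idx : Fin (j + 1) → Fin n) (c : Fin j → Bool) :
    sel idx (Fin.cons false c : Fin (j + 1) → Bool)
      = sel (fun i => idx i.succ) c := by
  simp [sel, List.finRange_succ, List.filter_map, Function.comp_def]

lemma not_cons {j : ℕ} (b : Bool) (c : Fin j → Bool) :
    (fun r => !(Fin.cons b c : Fin (j + 1) → Bool) r)
      = (Fin.cons (!b) (fun r => !c r) : Fin (j + 1) → Bool) := by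
  funext r
  refine Fin.cases ?_ (fun r => ?_) r <;> simp

lemma PD_leibniz {n : ℕ} {u v : (Fin n → ℝ) → ℝ} : ∀ (j : ℕ), ContDiff ℝ j u → ContDiff ℝ j v →
    ∀ (idx : Fin j → Fin n), PD (List.ofFn idx) (fun x => u x * v x) =
      fun x => ∑ c : Fin j → Bool, PD (sel idx c) u x * PD (sel idx (fun r => !c r)) v x := by
  intro j
  induction j with
  | zero => intro _ _ idx; funext x; simp [PD, sel]
  | succ j ih =>
    intro hu hv idx
    have le : ((j : ℕ) : WithTop ℕ∞) ≤ ((j + 1 : ℕ) : WithTop ℕ∞) := by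
      push_cast; exact le_self_add
    rw [List.ofFn_succ]
    funext x
    change fderiv ℝ (PD (List.ofFn fun i => idx i.succ) _) x (Pi.single (idx 0) 1) = _
    rw [ih (hu.of_le le) (hv.of_le le)]
    have hd : ∀ {w : (Fin n → ℝ) → ℝ}, ContDiff ℝ (j + 1 : ℕ) w → ∀ c : Fin j → Bool,
        DifferentiableAt ℝ (PD (sel (fun i => idx i.succ) c) w) x := by
      intro w hw c
      have : ContDiff ℝ (1 : ℕ) (PD (sel (fun i => idx i.succ) c) w) := PD_contDiff _ 1 (hw.of_le (by
        have := sel_length_le (fun i => idx i.succ) c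
        exact_mod_cast (by omega)))
      exact (this.differentiable (by norm_num)) x
    rw [fderiv_fun_sum (fun c _ => (hd hu c).fun_mul (hd hv _))]
    rw [← (Fin.consEquiv (fun _ : Fin (j + 1) => Bool)).sum_comp, Fintype.sum_prod_type,
      Fintype.sum_bool, ← Finset.sum_add_distrib, FunLike.coe_sum, Finset.sum_apply]
    refine Finset.sum_congr rfl fun c _ => ?_
    rw [fderiv_fun_mul (hd hu c) (hd hv _)]
    simp only [Fin.consEquiv, Equiv.coe_fn_mk, not_cons, Bool.not_true, Bool.not_false,
      sel_cons_true, sel_cons_false, PD]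
    simp
    ring

lemma shuffle_sel_left {n j i : ℕ} (hi : i ≤ j) {σ : Equiv.Perm (Fin j)} (hσ : σ ∈ shuffles j i)
    (idx : Fin j → Fin n) :
    sel idx (fun r => decide ((σ.symm r : ℕ) < i)) = List.ofFn (fun r => idx (σ (finL i hi r))) := by
  have : (List.finRange j).filter (fun r => decide ((σ.symm r : ℕ) < i))
      = List.ofFn (fun r => σ (finL i hi r)) := by
    obtain ⟨h1, h2⟩ := (Finset.mem_filter.1 hσ).2
    have s1 : ((List.finRange j).filter (fun r => decide ((σ.symm r : ℕ) < i))).Pairwise (· < ·) :=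
      (List.pairwise_lt_finRange j).filter _
    have s2 : (List.ofFn (fun r => σ (finL i hi r))).Pairwise (· < ·) := by
      rw [List.pairwise_ofFn]
      intro a b hab
      exact h1 _ _ (by simpa [finL] using hab) (by simp [finL])
    refine List.Perm.eq_of_pairwise' s1 s2 ?_
    refine (List.perm_ext_iff_of_nodup (s1.imp ne_of_lt) (s2.imp ne_of_lt)).2 ?_
    intro a
    simp only [List.mem_filter, List.mem_finRange, true_and, decide_eq_true_eq, List.mem_ofFn]
    constructor
    · intro h
      exact ⟨⟨_, h⟩, by simp [finL]⟩
    · rintro ⟨b, rfl⟩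
      simp [finL]
  unfold sel
  rw [this, List.map_ofFn]; rfl

lemma shuffle_sel_right {n j i l : ℕ} (hi : i + l = j) {σ : Equiv.Perm (Fin j)}
    (hσ : σ ∈ shuffles j i) (idx : Fin j → Fin n) :
    sel idx (fun r => !decide ((σ.symm r : ℕ) < i)) = List.ofFn (fun r => idx (σ (finR i hi r))) := by
  have : (List.finRange j).filter (fun r => !decide ((σ.symm r : ℕ) < i))
      = List.ofFn (fun r => σ (finR i hi r)) := by
    obtain ⟨h1, h2⟩ := (Finset.mem_filter.1 hσ).2
    have s1 : ((List.finRange j).filter (fun r => !decide ((σ.symm r : ℕ) < i))).Pairwise (· < ·) :=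
      (List.pairwise_lt_finRange j).filter _
    have s2 : (List.ofFn (fun r => σ (finR i hi r))).Pairwise (· < ·) := by
      rw [List.pairwise_ofFn]
      intro a b hab
      exact h2 _ _ (by simpa [finR] using hab) (by simp [finR])
    refine List.Perm.eq_of_pairwise' s1 s2 ?_
    refine (List.perm_ext_iff_of_nodup (s1.imp ne_of_lt) (s2.imp ne_of_lt)).2 ?_
    intro a
    simp only [List.mem_filter, List.mem_finRange, true_and, Bool.not_eq_true',
      decide_eq_false_iff_not, not_lt, List.mem_ofFn]
    constructor
    · intro h
      refine ⟨⟨(σ.symm a : ℕ) - i, by have := (σ.symm a).2; omega⟩, ?_⟩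
      have : finR i hi ⟨(σ.symm a : ℕ) - i, by have := (σ.symm a).2; omega⟩ = σ.symm a := by
        ext; simp [finR]; omega
      rw [this]; simp
    · rintro ⟨b, rfl⟩
      simp [finR]
  unfold sel
  rw [this, List.map_ofFn]; rfl

lemma mem_shuffles_sort {j : ℕ} (c : Fin j → Bool) (a : Fin j) :
    (a : ℕ) < (Finset.univ.filter fun r => c r = true).card ↔
      c (Tuple.sort (fun r => !c r) a) = true := by
  have h := Tuple.lt_card_le_iff_apply_le_of_monotone (j := a) (a := false)
    (Tuple.monotone_sort (fun r => !c r))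
  have e : (Finset.univ.filter fun r => c r = true).card =
      (Finset.univ.filter fun i => ((fun r => !c r) ∘ Tuple.sort (fun r => !c r)) i ≤ false).card := by
    symm
    refine Finset.card_equiv (Tuple.sort (fun r => !c r)) ?_
    intro i
    simp only [Finset.mem_filter, Finset.mem_univ, true_and, Function.comp]
    cases c ((Tuple.sort fun r => !c r) i) <;> decide
  rw [e, h]
  simp only [Function.comp]
  cases c ((Tuple.sort fun r => !c r) a) <;> decide

lemma sum_shuffles {j : ℕ} (F : (Fin j → Bool) → ℝ) :
    ∑ c, F c = ∑ i : Fin (j + 1), ∑ σ ∈ shuffles j (i : ℕ),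
      F (fun r => decide ((σ.symm r : ℕ) < (i : ℕ))) := by
  symm
  rw [Finset.sum_sigma']
  refine Finset.sum_bij'
    (fun x _ => fun r => decide ((x.2.symm r : ℕ) < (x.1 : ℕ)))
    (fun c _ => ⟨⟨(Finset.univ.filter fun r => c r = true).card, 
      Nat.lt_succ_of_le ((Finset.card_le_univ _).trans (by simp))⟩, Tuple.sort (fun r => !c r)⟩)
    (fun _ _ => Finset.mem_univ _) ?_ ?_ ?_ (fun _ _ => rfl)
  · intro c _
    simp only [Finset.mem_sigma, Finset.mem_univ, true_and, shuffles, Finset.mem_filter]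
    have hs := (Tuple.eq_sort_iff (f := fun r => !c r) (σ := Tuple.sort (fun r => !c r))).1 rfl
    constructor
    · intro a b hab hb
      have h1 := (mem_shuffles_sort c b).1 hb
      have h2 := (mem_shuffles_sort c a).1 (lt_trans hab hb)
      exact hs.2 a b hab (by simp only [h1, h2])
    · intro a b hab ha
      have h1 := (mem_shuffles_sort c a).not.1 (not_lt.2 ha)
      have h2 := (mem_shuffles_sort c b).not.1 (not_lt.2 (ha.trans (le_of_lt hab)))
      rw [Bool.not_eq_true] at h1 h2
      exact hs.2 a b hab (by simp only [h1, h2])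
  · rintro ⟨i, σ⟩ hx
    simp only [Finset.mem_sigma, Finset.mem_univ, true_and, shuffles, Finset.mem_filter] at hx
    have e1 : (Finset.univ.filter fun r => decide ((σ.symm r : ℕ) < (i : ℕ)) = true).card = i := by
      have : (Finset.univ.filter fun r => decide ((σ.symm r : ℕ) < (i : ℕ)) = true).card
          = (Finset.univ.filter fun r : Fin j => (r : ℕ) < i).card :=
        Finset.card_equiv σ.symm (by intro a; simp)
      rw [this, Fin.card_filter_val_lt]
      have := i.2; omega
    have e2 : Tuple.sort (fun r => !decide ((σ.symm r : ℕ) < (i : ℕ))) = σ := by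
      symm
      rw [Tuple.eq_sort_iff]
      constructor
      · intro a b hab
        have hab' : (a : ℕ) ≤ b := hab
        simp only [Function.comp, Equiv.symm_apply_apply]
        by_cases hb : (b : ℕ) < i
        · have : (a : ℕ) < i := by omega
          simp [hb, this]
        · simp [hb, Bool.le_true]
      · intro a b hab hh
        have hab' : (a : ℕ) < b := hab
        simp only [Equiv.symm_apply_apply] at hh
        by_cases hb : (b : ℕ) < i
        · exact hx.1 a b hab hb
        · refine hx.2 a b hab ?_
          simpa [hb] using hh
    refine Sigma.ext (Fin.ext e1) ?_
    exact heq_of_eq e2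
  · intro c _
    funext r
    have := mem_shuffles_sort c ((Tuple.sort (fun r => !c r)).symm r)
    rw [Equiv.apply_symm_apply] at this
    simp only [this, Bool.decide_eq_true]

lemma Dt_leibniz {n j : ℕ} {u v : (Fin n → ℝ) → ℝ} (hu : ContDiff ℝ j u) (hv : ContDiff ℝ j v)
    (ξ : Fin n → ℝ) (idx : Fin j → Fin n) :
    Dt n j (fun x => u x * v x) ξ idx = ∑ i : Fin (j + 1), ∑ σ ∈ shuffles j (i : ℕ),
      Dt n (i : ℕ) u ξ (fun r => idx (σ (finL (i : ℕ) (by have := i.isLt; omega) r))) *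
      Dt n (j - (i : ℕ)) v ξ
        (fun r => idx (σ (finR (i : ℕ) (by have := i.isLt; omega) r))) := by
  rw [Dt_eq_PD j (hu.mul hv), PD_leibniz j hu hv]
  beta_reduce
  rw [sum_shuffles]
  refine Finset.sum_congr rfl fun i _ => Finset.sum_congr rfl fun σ hσ => ?_
  have hi := i.2
  rw [Dt_eq_PD _ (hu.of_le (by exact_mod_cast (by omega))),
    Dt_eq_PD _ (hv.of_le (by exact_mod_cast (by omega))),
    shuffle_sel_left _ hσ, shuffle_sel_right _ hσ]

lemma Dt_sum {n j : ℕ} {ι : Type*} [Fintype ι] {u : ι → (Fin n → ℝ) → ℝ}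
    (hu : ∀ s, ContDiff ℝ j (u s)) (ξ : Fin n → ℝ) (idx : Fin j → Fin n) :
    Dt n j (fun x => ∑ s, u s x) ξ idx = ∑ s, Dt n j (u s) ξ idx := by
  unfold Dt
  rw [iteratedFDeriv_fun_sum_apply (fun s _ => (hu s).contDiffAt)]
  simp

lemma Dt_add {n j : ℕ} {u v : (Fin n → ℝ) → ℝ} (hu : ContDiff ℝ j u) (hv : ContDiff ℝ j v)
    (ξ : Fin n → ℝ) (idx : Fin j → Fin n) :
    Dt n j (fun x => u x + v x) ξ idx = Dt n j u ξ idx + Dt n j v ξ idx := by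
  unfold Dt
  rw [fun_iteratedFDeriv_add_apply hu.contDiffAt hv.contDiffAt]
  rfl

lemma Dt_cmul {n j : ℕ} {u : (Fin n → ℝ) → ℝ} (hu : ContDiff ℝ j u) (a : ℝ)
    (ξ : Fin n → ℝ) (idx : Fin j → Fin n) :
    Dt n j (fun x => a * u x) ξ idx = a * Dt n j u ξ idx := by
  unfold Dt
  have := iteratedFDeriv_const_smul_apply' (a := a) (hu.contDiffAt (x := ξ))
  simp only [smul_eq_mul] at this
  rw [this]
  rfl

lemma Dt_const {n j : ℕ} (hj : j ≠ 0) (a : ℝ) (ξ : Fin n → ℝ) (idx : Fin j → Fin n) :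
    Dt n j (fun _ => a) ξ idx = 0 := by
  unfold Dt
  rw [iteratedFDeriv_const_of_ne hj]; rfl

lemma Dt_bilin {n j : ℕ} {ι κ : Type*} [Fintype ι] [Fintype κ]
    {u : ι → (Fin n → ℝ) → ℝ} {v : κ → (Fin n → ℝ) → ℝ} (A : ι → κ → ℝ)
    (hu : ∀ s, ContDiff ℝ j (u s)) (hv : ∀ s, ContDiff ℝ j (v s))
    (ξ : Fin n → ℝ) (idx : Fin j → Fin n) :
    Dt n j (fun x => ∑ s, ∑ r, u s x * A s r * v r x) ξ idx =
      ∑ i : Fin (j + 1), ∑ σ ∈ shuffles j (i : ℕ), ∑ s, ∑ r,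
      Dt n (i : ℕ) (u s) ξ (fun r => idx (σ (finL (i : ℕ) (by have := i.isLt; omega) r))) * A s r *
      Dt n (j - (i : ℕ)) (v r) ξ
        (fun r => idx (σ (finR (i : ℕ) (by have := i.isLt; omega) r))) := by
  have e : (fun x => ∑ s, ∑ r, u s x * A s r * v r x)
      = fun x => ∑ q : ι × κ, A q.1 q.2 * (u q.1 x * v q.2 x) := by
    funext x
    rw [Fintype.sum_prod_type]
    refine Finset.sum_congr rfl fun s _ => Finset.sum_congr rfl fun r _ => by ring
  rw [e, Dt_sum (u := fun (q : ι × κ) x => A q.1 q.2 * (u q.1 x * v q.2 x))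
    (fun q => contDiff_const.mul ((hu q.1).mul (hv q.2)))]
  simp only [Dt_cmul ((hu _).mul (hv _)), Dt_leibniz (hu _) (hv _), Finset.mul_sum]
  rw [Finset.sum_comm]
  refine Finset.sum_congr rfl fun i _ => ?_
  rw [Finset.sum_comm]
  refine Finset.sum_congr rfl fun σ _ => ?_
  rw [Fintype.sum_prod_type]
  refine Finset.sum_congr rfl fun s _ => Finset.sum_congr rfl fun r _ => by ring

lemma Dt_mulsum {n j : ℕ} {ι : Type*} [Fintype ι]
    {u v : ι → (Fin n → ℝ) → ℝ}
    (hu : ∀ s, ContDiff ℝ j (u s)) (hv : ∀ s, ContDiff ℝ j (v s))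
    (ξ : Fin n → ℝ) (idx : Fin j → Fin n) :
    Dt n j (fun x => ∑ s, u s x * v s x) ξ idx =
      ∑ i : Fin (j + 1), ∑ σ ∈ shuffles j (i : ℕ), ∑ s,
      Dt n (i : ℕ) (u s) ξ (fun r => idx (σ (finL (i : ℕ) (by have := i.isLt; omega) r))) *
      Dt n (j - (i : ℕ)) (v s) ξ
        (fun r => idx (σ (finR (i : ℕ) (by have := i.isLt; omega) r))) := by
  rw [Dt_sum (fun s => (hu s).mul (hv s))]
  simp only [Dt_leibniz (hu _) (hv _)]
  rw [Finset.sum_comm]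
  refine Finset.sum_congr rfl fun i _ => ?_
  rw [Finset.sum_comm]

lemma Dt_grad {n j : ℕ} {u : (Fin n → ℝ) → ℝ} (hu : ContDiff ℝ (j + 1 : ℕ) u) (s : Fin n)
    (ξ : Fin n → ℝ) (idx : Fin j → Fin n) :
    Dt n j (PD [s] u) ξ idx = Dt n (j + 1) u ξ (Fin.cons s idx) := by
  rw [Dt_eq_PD _ (PD_contDiff [s] j hu), Dt_eq_PD _ hu, PD_comm s _ (by simpa using hu),
    List.ofFn_succ]
  simp

/-- higher order derivatives of the HJB equation.
Under the stated regularity assumptions on `f`, `h` and the value function `V`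
(with time derivative `Vt = ∂_t V` commuting with the `j`-th spatial derivative),
and the Hamilton–Jacobi–Bellman equation
`∂_t V = −∇Vᵀ f − ½‖Gᵀ∇V‖²_{R⁻¹} + ½‖y − h‖²_Q`, one has, for all
`(t, ξ) ∈ [0,T] × ℝⁿ` and `3 ≤ j ≤ k`,
`∂_t D^j V(t,ξ) = −Σᵢ Sym_{i,j−i}(D^{i+1}V *₁,₁ D^{j−i}f)
  − ½ Σᵢ Sym_{i,j−i}(D^{i+1}V *₁,₁ (GR⁻¹Gᵀ *₂,₁ D^{j−i+1}V))
  − D^j h *₁,₁ (Q y(t)) + ½ Σᵢ Sym_{i,j−i}(D^i h *₁,₁ (Q *₂,₁ D^{j−i}h))`,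
stated entrywise for every multi-index `idx`. -/
theorem hjb_higher_derivative {n m p k j : ℕ} (hj3 : 3 ≤ j) (hjk : j ≤ k)
    (T : ℝ) (hT : 0 < T)
    (G : Matrix (Fin n) (Fin m) ℝ)
    (R : Matrix (Fin m) (Fin m) ℝ) (hR : R.PosDef)
    (Q : Matrix (Fin p) (Fin p) ℝ) (hQ : Q.PosDef)
    (y : ℝ → Fin p → ℝ)
    (f : (Fin n → ℝ) → Fin n → ℝ) (hf : ContDiff ℝ (k : ℕ∞) f)
    (h : (Fin n → ℝ) → Fin p → ℝ) (hh : ContDiff ℝ (k : ℕ∞) h)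
    (V Vt : ℝ → (Fin n → ℝ) → ℝ)
    (hV : ∀ t : ℝ, ContDiff ℝ ((k + 1 : ℕ) : ℕ∞) (V t))
    (hVt : ∀ (t : ℝ) (ξ : Fin n → ℝ), HasDerivAt (fun s => V s ξ) (Vt t ξ) t)
    (hcomm : ∀ (t : ℝ) (ξ : Fin n → ℝ) (idx : Fin j → Fin n),
      HasDerivAt (fun s => Dt n j (V s) ξ idx) (Dt n j (Vt t) ξ idx) t)
    (hHJB : ∀ (t : ℝ) (ξ : Fin n → ℝ),
      Vt t ξ =
        -(∑ s : Fin n, Dt n 1 (V t) ξ (fun _ => s) * f ξ s) -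
          (1 / 2) *
            ((Gᵀ.mulVec fun s => Dt n 1 (V t) ξ fun _ => s) ⬝ᵥ
              R⁻¹.mulVec (Gᵀ.mulVec fun s => Dt n 1 (V t) ξ fun _ => s)) +
          (1 / 2) * ((y t - h ξ) ⬝ᵥ Q.mulVec (y t - h ξ)))
    (t : ℝ) (ht : t ∈ Set.Icc 0 T) (ξ : Fin n → ℝ) (idx : Fin j → Fin n) :
    HasDerivAt (fun s => Dt n j (V s) ξ idx)
      (-(∑ i : Fin (j + 1), ∑ σ ∈ shuffles j (i : ℕ), ∑ s : Fin n,
            Dt n ((i : ℕ) + 1) (V t) ξ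
                (Fin.cons s fun r : Fin (i : ℕ) =>
                  idx (σ (finL (i : ℕ) (by have := i.isLt; omega) r))) *
              Dt n (j - (i : ℕ)) (fun x => f x s) ξ
                (fun r => idx (σ (finR (i : ℕ) (by have := i.isLt; omega) r)))) -
        (1 / 2) *
          (∑ i : Fin (j + 1), ∑ σ ∈ shuffles j (i : ℕ), ∑ s : Fin n, ∑ r : Fin n,
            Dt n ((i : ℕ) + 1) (V t) ξ
                (Fin.cons s fun a : Fin (i : ℕ) =>
                  idx (σ (finL (i : ℕ) (by have := i.isLt; omega) a))) *
              (G * R⁻¹ * Gᵀ) s r *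
              Dt n (j - (i : ℕ) + 1) (V t) ξ
                (Fin.cons r fun a : Fin (j - (i : ℕ)) =>
                  idx (σ (finR (i : ℕ) (by have := i.isLt; omega) a)))) -
        (∑ s : Fin p, Dt n j (fun x => h x s) ξ idx * Q.mulVec (y t) s) +
        (1 / 2) *
          (∑ i : Fin (j + 1), ∑ σ ∈ shuffles j (i : ℕ), ∑ s : Fin p, ∑ r : Fin p,
            Dt n (i : ℕ) (fun x => h x s) ξ
                (fun a => idx (σ (finL (i : ℕ) (by have := i.isLt; omega) a))) *
              Q s r *
              Dt n (j - (i : ℕ)) (fun x => h x r) ξ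
                (fun a => idx (σ (finR (i : ℕ) (by have := i.isLt; omega) a)))))
      t := by
  have hVj : ContDiff ℝ (j + 1 : ℕ) (V t) := (hV t).of_le (by exact_mod_cast (by omega))
  have hfj : ∀ s, ContDiff ℝ j (fun x => f x s) := fun s =>
    (contDiff_pi.1 hf s).of_le (by exact_mod_cast hjk)
  have hhj : ∀ s, ContDiff ℝ j (fun x => h x s) := fun s =>
    (contDiff_pi.1 hh s).of_le (by exact_mod_cast hjk)
  have hg : ∀ s, ContDiff ℝ j (PD [s] (V t)) := fun s => PD_contDiff [s] j hVj
  have hD1 : ∀ x s, Dt n 1 (V t) x (fun _ => s) = PD [s] (V t) x := by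
    intro x s
    rw [Dt_eq_PD 1 (hVj.of_le (by exact_mod_cast (by omega)))]
    simp
  have hQs : Qᵀ = Q := by
    have := hQ.isHermitian
    rwa [Matrix.IsHermitian, Matrix.conjTranspose_eq_transpose_of_trivial] at this
  have bil : ∀ {d : ℕ} (A : Matrix (Fin d) (Fin d) ℝ) (a b : Fin d → ℝ),
      a ⬝ᵥ A.mulVec b = ∑ s, ∑ r, a s * A s r * b r := by
    intro d A a b
    simp only [dotProduct, Matrix.mulVec, Finset.mul_sum, mul_assoc]
  have hVt' : Vt t = fun x =>
      (((-1) * (∑ s, PD [s] (V t) x * f x s) +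
        (-(1 / 2)) * (∑ s, ∑ r, PD [s] (V t) x * (G * R⁻¹ * Gᵀ) s r * PD [r] (V t) x)) +
      ((-1) * (∑ s, Q.mulVec (y t) s * h x s) +
        (1 / 2) * (∑ s, ∑ r, h x s * Q s r * h x r))) + (1 / 2) * (y t ⬝ᵥ Q.mulVec (y t)) := by
    funext x
    rw [hHJB]
    simp only [hD1]
    have e1 : ∀ g : Fin n → ℝ, (Gᵀ.mulVec g) ⬝ᵥ R⁻¹.mulVec (Gᵀ.mulVec g)
        = g ⬝ᵥ (G * R⁻¹ * Gᵀ).mulVec g := by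
      intro g
      rw [← Matrix.mulVec_mulVec, ← Matrix.mulVec_mulVec, Matrix.dotProduct_mulVec g G,
        ← Matrix.mulVec_transpose]
    have e2 : y t ⬝ᵥ Q.mulVec (h x) = Q.mulVec (y t) ⬝ᵥ h x := by
      rw [Matrix.dotProduct_mulVec, ← Matrix.mulVec_transpose, hQs]
    have e3 : h x ⬝ᵥ Q.mulVec (y t) = Q.mulVec (y t) ⬝ᵥ h x := dotProduct_comm _ _
    rw [e1, ← bil, ← bil, Matrix.mulVec_sub, sub_dotProduct, dotProduct_sub, dotProduct_sub, e2, e3]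
    change _ = (((-1) * _ + _) + ((-1) * (Q.mulVec (y t) ⬝ᵥ h x) + _)) + _
    ring
  have cA : ContDiff ℝ j (fun x => ∑ s, PD [s] (V t) x * f x s) :=
    ContDiff.sum fun s _ => (hg s).mul (hfj s)
  have cB : ContDiff ℝ j (fun x => ∑ s, ∑ r, PD [s] (V t) x * (G * R⁻¹ * Gᵀ) s r * PD [r] (V t) x) :=
    ContDiff.sum fun s _ => ContDiff.sum fun r _ => ((hg s).mul contDiff_const).mul (hg r)
  have cC : ContDiff ℝ j (fun x => ∑ s, Q.mulVec (y t) s * h x s) :=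
    ContDiff.sum fun s _ => contDiff_const.mul (hhj s)
  have cE : ContDiff ℝ j (fun x => ∑ s, ∑ r, h x s * Q s r * h x r) :=
    ContDiff.sum fun s _ => ContDiff.sum fun r _ => ((hhj s).mul contDiff_const).mul (hhj r)
  have cA' := (contDiff_const (c := (-1 : ℝ))).mul cA
  have cB' := (contDiff_const (c := (-(1 / 2) : ℝ))).mul cB
  have cC' := (contDiff_const (c := (-1 : ℝ))).mul cC
  have cE' := (contDiff_const (c := ((1 / 2) : ℝ))).mul cE
  have main := hcomm t ξ idx
  rw [hVt', Dt_add ((cA'.add cB').add (cC'.add cE')) contDiff_const,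
    Dt_add (cA'.add cB') (cC'.add cE'), Dt_add cA' cB', Dt_add cC' cE',
    Dt_cmul cA, Dt_cmul cB, Dt_cmul cC, Dt_cmul cE, Dt_const (by omega),
    Dt_mulsum hg hfj, Dt_bilin (G * R⁻¹ * Gᵀ) hg hg, Dt_bilin Q hhj hhj,
    Dt_sum (fun s => contDiff_const.mul (hhj s))] at main
  have hgr : ∀ (i : ℕ), i ≤ j → ∀ s (id : Fin i → Fin n), Dt n i (PD [s] (V t)) ξ id
      = Dt n (i + 1) (V t) ξ (Fin.cons s id) := fun i hi s id =>
    Dt_grad (hVj.of_le (by exact_mod_cast (by omega))) s ξ id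
  have hgr1 : ∀ (i : Fin (j + 1)) s (id : Fin (i : ℕ) → Fin n), Dt n i (PD [s] (V t)) ξ id
      = Dt n (i + 1) (V t) ξ (Fin.cons s id) := fun i => hgr i (by omega)
  have hgr2 : ∀ (i : Fin (j + 1)) s (id : Fin (j - (i : ℕ)) → Fin n),
      Dt n (j - i) (PD [s] (V t)) ξ id
      = Dt n (j - i + 1) (V t) ξ (Fin.cons s id) := fun i => hgr (j - i) (by omega)
  simp only [hgr1, hgr2, Dt_cmul (hhj _)] at main
  refine main.congr_deriv ?_
  simp only [mul_comm (Q.mulVec (y t) _)]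
  ring
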